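/- Every semisimple Boolean inverse semigroup is isomorphic to a restricted direct product ⊕_{i∈I} M_{|X_i|}(G_i⁰), where each factor is the Boolean inverse semigroup of |X_i| × |X_i| generalized rook matrices over a group G_i with a zero adjoined, for nonempty sets X_i. -/

import Mathlib

namespace Paper

/-- An inverse semigroup with zero: an associative multiplication, a zero that is
absorbing, and a map `⁻¹` sending each element to its unique generalized inverse. -/
class IsInverseSemigroup (S : Type*) [Mul S] [Zero S] [Inv S] : Prop where
  mul_assoc : ∀ a b c : S, a * b * c = a * (b * c)
  mul_inv_mul : ∀ a : S, a * a⁻¹ * a = a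
  inv_mul_inv : ∀ a : S, a⁻¹ * a * a⁻¹ = a⁻¹
  inv_unique : ∀ a b : S, a * b * a = a → b * a * b = b → b = a⁻¹
  zero_mul : ∀ a : S, 0 * a = 0
  mul_zero : ∀ a : S, a * 0 = 0

variable {S : Type*} [Mul S] [Zero S] [Inv S]

/-- The natural partial order: `a ≤ b` iff `a = b * a⁻¹ * a`. -/
def nle (a b : S) : Prop := a = b * a⁻¹ * a

/-- `e` is an idempotent. -/
def idem (e : S) : Prop := e * e = e

/-- `a` and `b` are compatible. -/
def compat (a b : S) : Prop := idem (a⁻¹ * b) ∧ idem (a * b⁻¹)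

/-- `a` and `b` are orthogonal. -/
def orth (a b : S) : Prop := a⁻¹ * b = 0 ∧ a * b⁻¹ = 0

/-- `j` is the least upper bound of `a` and `b` for the natural partial order. -/
def isJoin (a b j : S) : Prop :=
  nle a j ∧ nle b j ∧ ∀ c : S, nle a c → nle b c → nle j c

/-- `m` is the greatest lower bound of `a` and `b` for the natural partial order. -/
def isMeet (a b m : S) : Prop :=
  nle m a ∧ nle m b ∧ ∀ c : S, nle c a → nle c b → nle c m

/-- `a` is an atom: a nonzero element with nothing strictly between it and `0`. -/
def isAtomElem (a : S) : Prop := a ≠ 0 ∧ ∀ x : S, nle x a → x = a ∨ x = 0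

/-- `s` is the least upper bound of the finite family `f`. -/
def isJoinFin {m : ℕ} (f : Fin m → S) (s : S) : Prop :=
  (∀ i, nle (f i) s) ∧ ∀ c : S, (∀ i, nle (f i) c) → nle s c

/-- A Boolean inverse semigroup: a nonzero inverse semigroup with zero in which
compatible pairs have joins, multiplication distributes over binary compatible joins,
and the idempotents form a generalized Boolean algebra under the natural partial
order (meets of idempotents are automatically given by multiplication; the extra
requirement is the existence of relative complements). -/
class IsBooleanInverseSemigroup (S : Type*) [Mul S] [Zero S] [Inv S]
    extends IsInverseSemigroup S : Prop where
  exists_ne_zero : ∃ a : S, a ≠ 0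
  compat_join : ∀ a b : S, compat a b → ∃ j, isJoin a b j
  mul_join : ∀ a b j c : S, isJoin a b j → isJoin (c * a) (c * b) (c * j)
  join_mul : ∀ a b j c : S, isJoin a b j → isJoin (a * c) (b * c) (j * c)
  relcomp : ∀ e f : S, idem e → idem f → nle f e →
    ∃ g : S, idem g ∧ nle g e ∧ g * f = 0 ∧ isJoin f g e


/-- An `X × X` generalized rook matrix over `G⁰` (`G` with a zero adjoined):
finitely many nonzero entries, and any two entries in the same row (resp. column)
lying in distinct columns (resp. rows) have orthogonal ranges (resp. domains). -/
def IsRook {X : Type*} {G : Type*} [Group G] (M : X → X → WithZero G) : Prop :=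
  Set.Finite {p : X × X | M p.1 p.2 ≠ 0} ∧
  (∀ i j k : X, j ≠ k → (M i j)⁻¹ * M i k = 0) ∧
  (∀ i j k : X, i ≠ j → M i k * (M j k)⁻¹ = 0)

open Classical in
/-- The product of rook matrices: `(A B)_{i j} = ⊕ₖ A_{i k} B_{k j}` (for rook
matrices, at most one summand is nonzero). -/
noncomputable def rookMul {X : Type*} {G : Type*} [Group G]
    (A B : X → X → WithZero G) : X → X → WithZero G := fun i j =>
  if h : ∃ k, A i k * B k j ≠ 0 then A i h.choose * B h.choose j else 0

section Basics
variable {S : Type*} [Mul S] [Zero S] [Inv S] [IsInverseSemigroup S]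

theorem ma (a b c : S) : a * b * c = a * (b * c) := IsInverseSemigroup.mul_assoc a b c
theorem aia (a : S) : a * (a⁻¹ * a) = a := by
  rw [← ma]; exact IsInverseSemigroup.mul_inv_mul a
theorem iai (a : S) : a⁻¹ * (a * a⁻¹) = a⁻¹ := by
  rw [← ma]; exact IsInverseSemigroup.inv_mul_inv a
theorem aiac (a c : S) : a * (a⁻¹ * (a * c)) = a * c := by
  rw [← ma, ← ma, ma a, aia]
theorem iaic (a c : S) : a⁻¹ * (a * (a⁻¹ * c)) = a⁻¹ * c := by
  rw [← ma, ← ma, ma a⁻¹, iai]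
theorem zm (a : S) : 0 * a = 0 := IsInverseSemigroup.zero_mul a
theorem mz (a : S) : a * 0 = 0 := IsInverseSemigroup.mul_zero a
theorem iu {a b : S} (h : a * (b * a) = a) (h' : b * (a * b) = b) : b = a⁻¹ :=
  IsInverseSemigroup.inv_unique a b (by rw [ma]; exact h) (by rw [ma]; exact h')
theorem ii (a : S) : a⁻¹⁻¹ = a := (iu (iai a) (aia a)).symm
theorem idem_inv {e : S} (h : idem e) : e⁻¹ = e := by
  unfold idem at h
  exact (iu (by rw [h, h]) (by rw [h, h])).symm
theorem idc {e : S} (h : idem e) (c : S) : e * (e * c) = e * c := by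
  unfold idem at h
  rw [← ma, h]
theorem idem_mul_aux {e f : S} (he : idem e) (hf : idem f) : idem (e * f) := by
  have h1 : f * ((e * f)⁻¹ * e) = (e * f)⁻¹ := by
    apply iu
    · have := aia (e * f)
      simp only [ma] at this ⊢
      rw [idc he, idc hf, this]
    · have := iaic (e * f) e
      simp only [ma] at this ⊢
      rw [idc he, idc hf, this]
  have h2 : idem ((e * f)⁻¹) := by
    have h3 : (f * ((e * f)⁻¹ * e)) * (f * ((e * f)⁻¹ * e)) = (f * ((e * f)⁻¹ * e)) := by
      have := iaic (e * f) e
      simp only [ma] at this ⊢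
      rw [this]
    rw [h1] at h3
    exact h3
  have h3 := idem_inv h2
  rw [ii] at h3
  rw [h3]; exact h2
theorem ic {e f : S} (he : idem e) (hf : idem f) : e * f = f * e := by
  have h1 := idem_mul_aux he hf
  have h2 := idem_mul_aux hf he
  have h3 : f * e = (e * f)⁻¹ := by
    unfold idem at h1 h2
    apply iu
    · simp only [ma] at h1 ⊢
      rw [idc he, idc hf, h1]
    · simp only [ma] at h2 ⊢
      rw [idc he, idc hf, h2]
  rw [h3, idem_inv h1]
theorem idem_mul {e f : S} (he : idem e) (hf : idem f) : idem (e * f) := idem_mul_aux he hf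
theorem idR (a : S) : idem (a * a⁻¹) := by
  unfold idem; simp only [ma, iai]
theorem idD (a : S) : idem (a⁻¹ * a) := by
  unfold idem; simp only [ma, aia]
theorem icc {e f : S} (he : idem e) (hf : idem f) (c : S) : e * (f * c) = f * (e * c) := by
  rw [← ma, ic he hf, ma]
theorem mi (a b : S) : (a * b)⁻¹ = b⁻¹ * a⁻¹ := by
  symm
  apply iu
  · have := icc (idR b) (idD a) b
    simp only [ma] at this ⊢
    rw [this, aiac, aia]
  · have := icc (idD a) (idR b) a⁻¹
    simp only [ma] at this ⊢
    rw [this, iaic, iai]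
theorem idem_zero : idem (0 : S) := zm 0
theorem zi : (0 : S)⁻¹ = 0 := idem_inv idem_zero
theorem idem_conj (a : S) {e : S} (he : idem e) : idem (a * e * a⁻¹) := by
  have := icc (idD a) he a⁻¹
  unfold idem
  simp only [ma] at this ⊢
  rw [show a⁻¹ * (a * (e * a⁻¹)) = e * (a⁻¹ * (a * a⁻¹)) from this, iai, idc he]
theorem conj_left (a : S) {e : S} (he : idem e) : a * e = a * e * a⁻¹ * a := by
  have := ic he (idD a)
  simp only [ma] at this ⊢
  rw [this, aiac]
theorem nle_left {a b : S} : nle a b ↔ ∃ e : S, idem e ∧ a = e * b := by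
  constructor
  · intro h
    unfold nle at h
    refine ⟨b * (a⁻¹ * a) * b⁻¹, idem_conj b (idD a), ?_⟩
    rw [← conj_left b (idD a), ← ma]; exact h
  · rintro ⟨e, he, rfl⟩
    unfold nle
    rw [mi, idem_inv he]
    have := icc (idR b) he b
    simp only [ma] at this ⊢
    rw [idc he, this, aia]
theorem nle_R {a b : S} (h : nle a b) : a = a * a⁻¹ * b := by
  obtain ⟨e, he, rfl⟩ := nle_left.1 h
  rw [mi, idem_inv he]
  have := icc (idR b) he b
  simp only [ma] at this ⊢
  rw [this, idc he, aia]
theorem nle_antisymm {a b : S} (h : nle a b) (h' : nle b a) : a = b := by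
  have h1 := nle_R h
  have h2 := nle_R h'
  have h3 := icc (idR a) (idR b) a
  rw [← h2, ← h1, ma a, aia, ← h2] at h3
  exact h3
theorem zero_nle (a : S) : nle 0 a := nle_left.2 ⟨0, idem_zero, (zm a).symm⟩
theorem nle_refl (a : S) : nle a a := nle_left.2 ⟨a * a⁻¹, idR a, by rw [ma, aia]⟩
end Basics
section Atoms
variable {S : Type*} [Mul S] [Zero S] [Inv S]

/-- idempotent atoms -/
def IA (e : S) : Prop := idem e ∧ e ≠ 0 ∧ ∀ x : S, idem x → x * e = e ∨ x * e = 0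

variable [IsInverseSemigroup S]

theorem IA_eq {e f : S} (he : IA e) (hf : IA f) (h : e * f ≠ 0) : e = f := by
  have h1 : e * f = f := (hf.2.2 e he.1).resolve_right h
  have h2 : f * e = e := (he.2.2 f hf.1).resolve_right (by rwa [ic hf.1 he.1])
  rw [← h1, ic he.1 hf.1, h2]

theorem R_zero {a : S} (h : a * a⁻¹ = 0) : a = 0 := by
  rw [← aia a, ← ma, h, zm]
theorem D_zero {a : S} (h : a⁻¹ * a = 0) : a = 0 := by
  rw [← aia a, h, mz]
theorem inv_zero' {a : S} (h : a⁻¹ = 0) : a = 0 := by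
  rw [← ii a, h, zi]

theorem IA_R {e a : S} (he : IA e) (h : e * a ≠ 0) : (e * a) * (e * a)⁻¹ = e := by
  have h1 : (e * a) * (e * a)⁻¹ = (a * a⁻¹) * e := by
    have := ic he.1 (idR a)
    have h2 := he.1
    unfold idem at h2
    rw [mi, idem_inv he.1, ← this]
    have h3 := icc he.1 (idR a) e
    simp only [ma] at this h3 ⊢
    rw [h3, h2, this]
  rw [h1]
  refine (he.2.2 _ (idR a)).resolve_right (fun h2 => h ?_)
  rw [← h1] at h2
  exact R_zero h2

theorem IA_D {u : S} (h : IA (u * u⁻¹)) : IA (u⁻¹ * u) := by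
  refine ⟨idD u, fun h0 => h.2.1 ?_, fun x hx => ?_⟩
  · rw [D_zero h0, zm]
  · have h1 : u⁻¹ * (u * x * u⁻¹ * (u * u⁻¹)) * u = x * (u⁻¹ * u) := by
      have := ic (idD u) hx
      have h2 := icc (idD u) hx (u⁻¹ * u)
      simp only [ma] at this h2 ⊢
      rw [iaic, h2, aia]
    rcases h.2.2 _ (idem_conj u hx) with h2 | h2
    · left; rw [← h1, h2, iai]
    · right; rw [← h1, h2, mz, zm]

/-- the D-relation on idempotents -/
def Conn (e f : S) : Prop := ∃ u : S, u * u⁻¹ = e ∧ u⁻¹ * u = f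

theorem Conn_refl {e : S} (he : idem e) : Conn e e :=
  ⟨e, by rw [idem_inv he]; exact he, by rw [idem_inv he]; exact he⟩
theorem Conn_symm {e f : S} (h : Conn e f) : Conn f e := by
  obtain ⟨u, h1, h2⟩ := h
  exact ⟨u⁻¹, by rw [ii]; exact h2, by rw [ii]; exact h1⟩
theorem Conn_trans {e f g : S} (h : Conn e f) (h' : Conn f g) : Conn e g := by
  obtain ⟨u, h1, h2⟩ := h
  obtain ⟨v, h3, h4⟩ := h'
  refine ⟨u * v, ?_, ?_⟩
  · rw [mi, ma, ← ma v, h3, ← h2, ma, iai, h1]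
  · rw [mi, ma, ← ma _ u, h2, ← h3, ma, aia, h4]

theorem D_eq {v q : S} (hv : IA (v⁻¹ * v)) (hq : IA (q⁻¹ * q)) (h : v * q⁻¹ ≠ 0) :
    v⁻¹ * v = q⁻¹ * q := by
  refine IA_eq hv hq (fun h0 => h ?_)
  have h1 : v * (v⁻¹ * v * (q⁻¹ * q)) * q⁻¹ = v * q⁻¹ := by
    simp only [ma]; rw [aiac, iai]
  rw [← h1, h0, mz, zm]

theorem pa_R {p a r : S} (hr : IA r) (hp : p * p⁻¹ = r) (h : p * a ≠ 0) :
    (p * a) * (p * a)⁻¹ = r := by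
  have h1 : r * (p * a) = p * a := by rw [← hp, ← ma, ma p, aia]
  have := IA_R hr (a := p * a) (by rwa [h1])
  rwa [h1] at this

theorem N_grp {p a q r : S} (hr : IA r) (hp : p * p⁻¹ = r) (hq : q * q⁻¹ = r)
    (h : p * a * q⁻¹ ≠ 0) : (p * a * q⁻¹) * (p * a * q⁻¹)⁻¹ = r ∧
      (p * a * q⁻¹)⁻¹ * (p * a * q⁻¹) = r := by
  constructor
  · rw [ma p]
    exact pa_R hr hp (by rwa [← ma])
  · have := pa_R hr hq (a := (p * a)⁻¹) (by
      intro h0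
      apply h
      apply inv_zero'
      rw [mi, ii, h0])
    rw [mi q, ii] at this
    rw [mi, ii]
    exact this

theorem N_mul {p a w b q r : S} (hr : IA r) (hp : p * p⁻¹ = r) (hw : IA (w⁻¹ * w))
    (h : p * a * w⁻¹ ≠ 0) : (p * a * w⁻¹) * (w * b * q⁻¹) = p * (a * b) * q⁻¹ := by
  have h0 : p * a ≠ 0 := fun h0 => h (by rw [h0, zm])
  have h1 := pa_R hr hp h0
  have h2 := D_eq (IA_D (by rw [h1]; exact hr)) hw h
  have h3 : p * a * (w⁻¹ * w) = p * a := by rw [← h2, aia]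
  rw [show (p * a * w⁻¹) * (w * b * q⁻¹) = p * a * (w⁻¹ * w) * (b * q⁻¹) by simp only [ma], h3]
  simp only [ma]

theorem join_unique {a b j k : S} (h : isJoin a b j) (h' : isJoin a b k) : j = k :=
  nle_antisymm (h.2.2 _ h'.1 h'.2.1) (h'.2.2 _ h.1 h.2.1)
theorem join_zero_left (a : S) : isJoin 0 a a := ⟨zero_nle a, nle_refl a, fun _ _ h => h⟩
theorem join_zero_right (a : S) : isJoin a 0 a := ⟨nle_refl a, zero_nle a, fun _ h _ => h⟩

theorem down_fin (hss : ∀ a : S, {x : S | nle x a}.Finite) (g : S) :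
    {x : S | idem x ∧ x * g = x}.Finite :=
  (hss g).subset fun x hx => nle_left.2 ⟨x, hx.1, hx.2.symm⟩

theorem down_lt (hss : ∀ a : S, {x : S | nle x a}.Finite) {g h : S} (hg : idem g)
    (h1 : h * g = h) (h2 : g * h ≠ g) :
    {x : S | idem x ∧ x * h = x}.ncard < {x : S | idem x ∧ x * g = x}.ncard := by
  refine Set.ncard_lt_ncard ⟨fun x hx => ⟨hx.1, ?_⟩, fun h3 => h2 ?_⟩ (down_fin hss g)
  · rw [← hx.2, ma, h1]
  · exact (h3 (show g ∈ {x : S | idem x ∧ x * g = x} from ⟨hg, hg⟩)).2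

theorem exists_atom (hss : ∀ a : S, {x : S | nle x a}.Finite) (g : S) (hg : idem g)
    (h0 : g ≠ 0) : ∃ e : S, IA e ∧ e * g = e := by
  induction hn : {x : S | idem x ∧ x * g = x}.ncard using Nat.strong_induction_on generalizing g with
  | _ n ih =>
    by_cases hA : IA g
    · exact ⟨g, hA, hg⟩
    · have : ∃ x : S, idem x ∧ x * g ≠ g ∧ x * g ≠ 0 := by
        by_contra hc
        push Not at hc
        exact hA ⟨hg, h0, fun x hx => or_iff_not_imp_left.2 (hc x hx)⟩
      obtain ⟨x, hx, h1, h2⟩ := this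
      have hgg : x * g * g = x * g := by rw [ma, hg]
      have h3 : g * (x * g) = x * g := by rw [icc hg hx, hg]
      have hlt := down_lt hss hg hgg (by rwa [h3])
      obtain ⟨e, he, h4⟩ := ih _ (hn ▸ hlt) (x * g) (idem_mul hx hg) h2 rfl
      exact ⟨e, he, by rw [← h4, ma, hgg]⟩

end Atoms

section Bool
variable {S : Type*} [Mul S] [Zero S] [Inv S] [IsBooleanInverseSemigroup S]

theorem eq_of_atoms_aux (hss : ∀ a : S, {x : S | nle x a}.Finite) (a b : S)
    (hab : ∀ e : S, IA e → e * a = e * b) (g : S) (hg : idem g) : g * a = g * b := by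
  induction hn : {x : S | idem x ∧ x * g = x}.ncard using Nat.strong_induction_on generalizing g with
  | _ n ih =>
    by_cases h0 : g = 0
    · rw [h0, zm, zm]
    · obtain ⟨e, he, h1⟩ := exists_atom hss g hg h0
      obtain ⟨h, hh, h2, h3, h4⟩ := IsBooleanInverseSemigroup.relcomp g e hg he.1
        (nle_left.2 ⟨e, he.1, h1.symm⟩)
      have h5 : h * g = h := by
        have := nle_R h2
        rw [idem_inv hh, hh] at this
        exact this.symm
      have hlt := down_lt hss hg h5 (fun h6 => he.2.1 (by
        rw [← h1, ← h6, ← ma, h1, ic he.1 hh, h3]))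
      have h7 := ih _ (hn ▸ hlt) h hh rfl
      have j1 := IsBooleanInverseSemigroup.join_mul _ _ _ a h4
      have j2 := IsBooleanInverseSemigroup.join_mul _ _ _ b h4
      rw [hab e he, h7] at j1
      exact join_unique j1 j2

theorem eq_of_atoms (hss : ∀ a : S, {x : S | nle x a}.Finite) (a b : S)
    (hab : ∀ e : S, IA e → e * a = e * b) : a = b := by
  apply nle_antisymm
  · refine nle_left.2 ⟨a * a⁻¹, idR a, ?_⟩
    rw [← eq_of_atoms_aux hss a b hab _ (idR a), ma, aia]
  · refine nle_left.2 ⟨b * b⁻¹, idR b, ?_⟩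
    rw [eq_of_atoms_aux hss a b hab _ (idR b), ma, aia]

theorem exists_big_join (T : Set S) (hT : T.Finite) (h1 : ∀ u ∈ T, IA (u * u⁻¹))
    (h2 : ∀ u ∈ T, ∀ v ∈ T, u * u⁻¹ = v * v⁻¹ → u = v)
    (h3 : ∀ u ∈ T, ∀ v ∈ T, u⁻¹ * u = v⁻¹ * v → u = v) :
    ∃ j : S, (∀ e : S, IA e → (∀ u ∈ T, u * u⁻¹ = e → e * j = u) ∧
      ((∀ u ∈ T, u * u⁻¹ ≠ e) → e * j = 0)) ∧
      ∀ f : S, IA f → (∀ u ∈ T, u⁻¹ * u ≠ f) → j * f = 0 := by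
  induction T, hT using Set.Finite.induction_on with
  | empty => exact ⟨0, fun e _ => ⟨by simp, fun _ => mz e⟩, fun f _ _ => zm f⟩
  | @insert u T hu hT ih =>
    obtain ⟨j, hj1, hj2⟩ := ih (fun v hv => h1 v (Or.inr hv))
      (fun v hv w hw => h2 v (Or.inr hv) w (Or.inr hw))
      (fun v hv w hw => h3 v (Or.inr hv) w (Or.inr hw))
    have hu1 : IA (u * u⁻¹) := h1 u (Or.inl rfl)
    have hu2 : IA (u⁻¹ * u) := IA_D hu1
    have e1 : u * u⁻¹ * j = 0 := (hj1 _ hu1).2 fun v hv hh =>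
      hu (h2 v (Or.inr hv) u (Or.inl rfl) hh ▸ hv)
    have e2 : j * (u⁻¹ * u) = 0 := hj2 _ hu2 fun v hv hh =>
      hu (h3 v (Or.inr hv) u (Or.inl rfl) hh ▸ hv)
    have c1 : j⁻¹ * u = 0 := by
      have : (u * u⁻¹ * j)⁻¹ * u = j⁻¹ * u := by
        simp only [mi, ii, ma, aia]
      rw [← this, e1, zi, zm]
    have c2 : j * u⁻¹ = 0 := by
      have : j * (u⁻¹ * u) * u⁻¹ = j * u⁻¹ := by simp only [ma, iai]
      rw [← this, e2, zm]
    obtain ⟨k, hk⟩ := IsBooleanInverseSemigroup.compat_join j u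
      ⟨by rw [c1]; exact idem_zero, by rw [c2]; exact idem_zero⟩
    have hkL : ∀ e : S, IA e → (u * u⁻¹ = e → e * k = u) ∧ (u * u⁻¹ ≠ e → e * k = e * j) := by
      intro e he
      have hj := IsBooleanInverseSemigroup.mul_join _ _ _ e hk
      constructor
      · rintro rfl
        rw [e1, ma u u⁻¹ u, aia] at hj
        exact join_unique hj (join_zero_left u)
      · intro hne
        have : e * u = 0 := by
          by_contra h0
          apply hne
          symm
          apply IA_eq he hu1
          intro h4
          apply h0
          rw [← aia u, ← ma u, ← ma e, h4, zm]
        rw [this] at hj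
        exact join_unique hj (join_zero_right _)
    refine ⟨k, fun e he => ⟨?_, ?_⟩, ?_⟩
    · rintro v (rfl | hv) hve
      · exact (hkL e he).1 hve
      · rw [(hkL e he).2, (hj1 e he).1 v hv hve]
        intro h
        exact hu (h2 v (Or.inr hv) u (Or.inl rfl) (hve.trans h.symm) ▸ hv)
    · intro h
      rw [(hkL e he).2 (h u (Or.inl rfl)), (hj1 e he).2 fun v hv => h v (Or.inr hv)]
    · intro f hf h
      have hj := IsBooleanInverseSemigroup.join_mul _ _ _ f hk
      have : u * f = 0 := by
        by_contra h0
        apply h u (Or.inl rfl)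
        apply IA_eq hu2 hf
        intro h4
        apply h0
        rw [← aia u, ma, h4, mz]
      rw [this, hj2 f hf fun v hv => h v (Or.inr hv)] at hj
      exact join_unique hj (join_zero_right _)
end Bool
universe u

section Grp
variable {S : Type*} [Mul S] [Zero S] [Inv S]

/-- the maximal subgroup at `r` -/
abbrev Grp (r : S) : Type _ := {a : S // a * a⁻¹ = r ∧ a⁻¹ * a = r}

variable [IsInverseSemigroup S]

theorem grp_mul_R {a b r : S} (ha : a * a⁻¹ = r ∧ a⁻¹ * a = r) (hb : b * b⁻¹ = r ∧ b⁻¹ * b = r) :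
    a * b * (a * b)⁻¹ = r ∧ (a * b)⁻¹ * (a * b) = r := by
  constructor
  · rw [mi, ma, ← ma b, hb.1, ← ha.2, ma, iai, ha.1, ha.2]
  · rw [mi, ma, ← ma _ a, ha.2, ← hb.1, ma, aia, hb.2, hb.1]
theorem r_mul {a r : S} (ha : a * a⁻¹ = r) : r * a = a := by rw [← ha, ma, aia]
theorem mul_r {a r : S} (ha : a⁻¹ * a = r) : a * r = a := by rw [← ha, aia]

/-- its group structure (for an idempotent `r`) -/
@[reducible] def grpGroup (r : S) (hr : idem r) : Group (Grp r) where
  mul a b := ⟨a.1 * b.1, grp_mul_R a.2 b.2⟩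
  one := ⟨r, by rw [idem_inv hr]; exact hr, by rw [idem_inv hr]; exact hr⟩
  inv a := ⟨a.1⁻¹, by rw [ii]; exact a.2.2, by rw [ii]; exact a.2.1⟩
  mul_assoc a b c := Subtype.ext (ma a.1 b.1 c.1)
  one_mul a := Subtype.ext (r_mul a.2.1)
  mul_one a := Subtype.ext (mul_r a.2.2)
  inv_mul_cancel a := Subtype.ext a.2.2

/-- underlying element -/
def gval {r : S} : WithZero (Grp r) → S
  | none => 0
  | some a => a.1

open Classical in
/-- partial inverse of `gval` -/
noncomputable def toG (r : S) (x : S) : WithZero (Grp r) :=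
  if h : x * x⁻¹ = r ∧ x⁻¹ * x = r then some ⟨x, h⟩ else none

theorem gval_ne {r : S} (h0 : r ≠ 0) (a : Grp r) : a.1 ≠ 0 := by
  intro h
  have := a.2.1
  rw [h, zm] at this
  exact h0 this.symm

theorem gval_inj {r : S} (h0 : r ≠ 0) : Function.Injective (gval (r := r)) := by
  rintro (_ | a) (_ | b) h
  · rfl
  · exact absurd h.symm (gval_ne h0 b)
  · exact absurd h (gval_ne h0 a)
  · exact congrArg some (Subtype.ext h)

theorem gval_zero {r : S} : gval (0 : WithZero (Grp r)) = 0 := rfl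

theorem gval_eq_zero {r : S} (h0 : r ≠ 0) {x : WithZero (Grp r)} : gval x = 0 ↔ x = 0 :=
  ⟨fun h => gval_inj h0 h, fun h => h ▸ rfl⟩

theorem gval_spec {r : S} {x : WithZero (Grp r)} (h : x ≠ 0) :
    gval x * (gval x)⁻¹ = r ∧ (gval x)⁻¹ * gval x = r := by
  rcases x with _ | a
  · exact absurd rfl h
  · exact a.2

theorem gval_toG {r x : S} (h : x ≠ 0 → x * x⁻¹ = r ∧ x⁻¹ * x = r) : gval (toG r x) = x := by
  by_cases h1 : x * x⁻¹ = r ∧ x⁻¹ * x = r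
  · have : toG r x = some ⟨x, h1⟩ := dif_pos h1
    rw [this]; rfl
  · have : toG r x = none := dif_neg h1
    rw [this]
    by_contra h2
    exact h1 (h (fun h3 => h2 h3.symm))

theorem gval_mul {r : S} (hr : idem r) (x y : WithZero (Grp r)) :
    gval (letI := grpGroup r hr; x * y) = gval x * gval y := by
  rcases x with _ | a
  · exact (zm _).symm
  · rcases y with _ | b
    · exact (mz _).symm
    · rfl
end Grp

theorem rookMul_eq {X : Type*} {G : Type*} [Group G] (A B : X → X → WithZero G) (i j : X)
    (c : WithZero G) (h1 : ∀ k, A i k * B k j ≠ 0 → A i k * B k j = c)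
    (h2 : c ≠ 0 → ∃ k, A i k * B k j ≠ 0) : c = rookMul A B i j := by
  unfold rookMul
  split_ifs with h
  · exact (h1 _ h.choose_spec).symm
  · by_contra hc
    exact h (h2 hc)

theorem row_zero {G : Type*} [Group G] {x y : WithZero G} : x⁻¹ * y = 0 ↔ (x = 0 ∨ y = 0) := by
  simp
theorem col_zero {G : Type*} [Group G] {x y : WithZero G} : x * y⁻¹ = 0 ↔ (x = 0 ∨ y = 0) := by
  simp

section Main
variable {S : Type u} [Mul S] [Zero S] [Inv S]

/-- the type of idempotent atoms -/
abbrev At (S : Type u) [Mul S] [Zero S] : Type u := {e : S // IA e}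

variable [IsInverseSemigroup S]

/-- D-classes of atoms -/
def atSetoid (S : Type u) [Mul S] [Zero S] [Inv S] [IsInverseSemigroup S] : Setoid (At S) where
  r e f := Conn e.1 f.1
  iseqv := ⟨fun e => Conn_refl e.2.1, Conn_symm, Conn_trans⟩

/-- index set -/
def Ix (S : Type u) [Mul S] [Zero S] [Inv S] [IsInverseSemigroup S] : Type u :=
  Quotient (atSetoid S)

/-- class of an atom -/
def cl (e : At S) : Ix S := Quotient.mk (atSetoid S) e

/-- representative -/
noncomputable def rp (i : Ix S) : At S := Quotient.out i

theorem cl_rp (i : Ix S) : cl (rp i) = i := Quotient.out_eq i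
theorem cl_eq {e f : At S} : cl e = cl f ↔ Conn e.1 f.1 := Quotient.eq (r := atSetoid S)

theorem exists_t (e : At S) : Conn (rp (cl e)).1 e.1 := cl_eq.1 (cl_rp (cl e))

/-- connecting element -/
noncomputable def tt (e : At S) : S := (exists_t e).choose
theorem tt_R (e : At S) : tt e * (tt e)⁻¹ = (rp (cl e)).1 := (exists_t e).choose_spec.1
theorem tt_D (e : At S) : (tt e)⁻¹ * tt e = e.1 := (exists_t e).choose_spec.2

/-- matrix index set -/
abbrev XX (i : Ix S) : Type u := {e : At S // cl e = i}

theorem tt_R' {i : Ix S} (e : XX i) : tt e.1 * (tt e.1)⁻¹ = (rp i).1 := by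
  rw [tt_R, e.2]

theorem tt_IA (e : At S) : IA ((tt e)⁻¹ * tt e) := by rw [tt_D]; exact e.2

noncomputable instance instGG (i : Ix S) : Group (Grp (rp i).1) := grpGroup _ (rp i).2.1

/-- the matrix -/
noncomputable def mat (a : S) (i : Ix S) (e f : XX i) : WithZero (Grp (rp i).1) :=
  toG _ (tt e.1 * a * (tt f.1)⁻¹)

theorem gval_mat (a : S) (i : Ix S) (e f : XX i) :
    gval (mat a i e f) = tt e.1 * a * (tt f.1)⁻¹ :=
  gval_toG (N_grp (rp i).2 (tt_R' e) (tt_R' f))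

theorem mat_ne {a : S} {i : Ix S} {e f : XX i} : mat a i e f ≠ 0 ↔ tt e.1 * a * (tt f.1)⁻¹ ≠ 0 := by
  rw [← gval_mat, Ne, Ne, gval_eq_zero (rp i).2.2.1]

theorem gval_mul' {i : Ix S} (x y : WithZero (Grp (rp i).1)) : gval (x * y) = gval x * gval y :=
  gval_mul (rp i).2.1 x y

theorem tt_mul_ne {e : At S} {a : S} (h : tt e * a ≠ 0) : e.1 * a ≠ 0 := by
  intro h0
  apply h
  rw [← aia (tt e), tt_D, ma, h0, mz]

theorem fin_supp (hss : ∀ a : S, {x : S | nle x a}.Finite) (a : S) :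
    {e : At S | e.1 * a ≠ 0}.Finite := by
  refine Set.Finite.of_finite_image (f := fun e : At S => e.1 * a) ((hss a).subset ?_) ?_
  · rintro _ ⟨e, _, rfl⟩
    exact nle_left.2 ⟨e.1, e.2.1, rfl⟩
  · intro e he f hf hef
    apply Subtype.ext
    simp only at hef
    rw [← IA_R e.2 he, hef, IA_R f.2 hf]

theorem mat_row {a : S} {i : Ix S} {e f f' : XX i} (h : mat a i e f ≠ 0) (h' : mat a i e f' ≠ 0) :
    f = f' := by
  rw [mat_ne] at h h'
  have h0 : tt e.1 * a ≠ 0 := fun h0 => h (by rw [h0, zm])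
  have h1 := IA_D (u := tt e.1 * a) (by rw [pa_R (rp i).2 (tt_R' e) h0]; exact (rp i).2)
  have h2 := (D_eq h1 (tt_IA _) h).symm.trans (D_eq h1 (tt_IA _) h')
  rw [tt_D, tt_D] at h2
  exact Subtype.ext (Subtype.ext h2)

theorem mat_inv_ne {a : S} {i : Ix S} {e f : XX i} (h : mat a i e f ≠ 0) : mat a⁻¹ i f e ≠ 0 := by
  rw [mat_ne] at h ⊢
  intro h0
  apply h
  apply inv_zero'
  rw [← h0]
  simp only [mi, ii, ma]

theorem mat_rook (hss : ∀ a : S, {x : S | nle x a}.Finite) (a : S) (i : Ix S) :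
    IsRook (mat a i) := by
  refine ⟨?_, ?_, ?_⟩
  · have h1 := (fin_supp hss a).preimage (f := fun e : XX i => e.1) Subtype.val_injective.injOn
    have h2 := (fin_supp hss a⁻¹).preimage (f := fun e : XX i => e.1) Subtype.val_injective.injOn
    refine (h1.prod h2).subset ?_
    rintro ⟨e, f⟩ h
    refine ⟨tt_mul_ne fun h0 => ?_, tt_mul_ne fun h0 => ?_⟩
    · have := mat_ne.1 h
      simp only at this
      rw [h0, zm] at this
      exact this rfl
    · have := mat_ne.1 (mat_inv_ne h)
      simp only at this
      rw [h0, zm] at this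
      exact this rfl
  · intro e f f' h
    rw [row_zero]
    by_contra hc
    push Not at hc
    exact h (mat_row hc.1 hc.2)
  · intro e e' f h
    rw [col_zero]
    by_contra hc
    push Not at hc
    exact h (mat_row (mat_inv_ne hc.1) (mat_inv_ne hc.2))

theorem exists_col (e : At S) (a : S) (h : tt e * a ≠ 0) :
    ∃ f : XX (cl e), (tt f.1)⁻¹ * tt f.1 = (tt e * a)⁻¹ * (tt e * a) ∧
      tt e * a * (tt f.1)⁻¹ * tt f.1 = tt e * a ∧ tt e * a * (tt f.1)⁻¹ ≠ 0 := by
  have h1 := pa_R (rp (cl e)).2 (tt_R e) h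
  have h2 := IA_D (u := tt e * a) (by rw [h1]; exact (rp (cl e)).2)
  have h3 : cl (⟨_, h2⟩ : At S) = cl e := by
    rw [← cl_rp (cl e), cl_eq]
    exact Conn_symm ⟨_, h1, rfl⟩
  refine ⟨⟨_, h3⟩, tt_D _, ?_, ?_⟩
  · rw [ma _ _ (tt _), tt_D]; exact aia _
  · intro h4
    apply h
    have h5 := tt_D (⟨_, h2⟩ : At S)
    simp only at h5 h4
    have h6 := congrArg (fun x => tt e * a * x) h5
    rw [← ma (tt e * a), h4, zm, aia] at h6
    exact h6.symm

theorem mat_mul (a b : S) (i : Ix S) : mat (a * b) i = rookMul (mat a i) (mat b i) := by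
  funext e f
  apply rookMul_eq
  · intro k hk
    apply gval_inj (rp i).2.2.1
    rw [gval_mul', gval_mat, gval_mat, gval_mat]
    exact N_mul (rp i).2 (tt_R' e) (tt_IA _) (mat_ne.1 (left_ne_zero_of_mul hk))
  · intro h
    obtain ⟨e, rfl⟩ := e
    rw [mat_ne] at h
    obtain ⟨k, -, -, hk⟩ := exists_col e a (by
      intro h0; apply h; simp only; rw [← ma, h0, zm, zm])
    refine ⟨k, fun h0 => h ?_⟩
    rw [← gval_eq_zero (rp _).2.2.1, gval_mul', gval_mat, gval_mat] at h0
    rw [← h0]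
    exact (N_mul (rp _).2 (tt_R _) (tt_IA _) hk).symm

theorem mat_inj_aux {a b : S} (h : mat a = mat b) (e : At S) (h0 : tt e * a ≠ 0) :
    tt e * a = tt e * b := by
  obtain ⟨f, hf1, hf2, hf3⟩ := exists_col e a h0
  have h1 : tt e * a * (tt f.1)⁻¹ = tt e * b * (tt f.1)⁻¹ := by
    have := gval_mat a (cl e) ⟨e, rfl⟩ f
    rw [h, gval_mat] at this
    exact this.symm
  rw [h1] at hf2 hf3
  have h2 : tt e * b ≠ 0 := fun h2 => hf3 (by rw [h2, zm])
  have h3 := pa_R (rp (cl e)).2 (tt_R e) h2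
  have h4 := D_eq (IA_D (u := tt e * b) (by rw [h3]; exact (rp (cl e)).2)) (tt_IA _) hf3
  rw [← hf2, ma, ← h4, aia]

theorem mat_inj {a b : S} (h : mat a = mat b) (e : S) (he : IA e) : e * a = e * b := by
  have h1 : tt (⟨e, he⟩ : At S) * a = tt (⟨e, he⟩ : At S) * b := by
    by_cases h0 : tt (⟨e, he⟩ : At S) * a = 0
    · by_cases h2 : tt (⟨e, he⟩ : At S) * b = 0
      · rw [h0, h2]
      · exact (mat_inj_aux h.symm _ h2).symm
    · exact mat_inj_aux h _ h0
  have h2 := tt_D (⟨e, he⟩ : At S)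
  simp only at h2
  rw [← h2, ma, h1, ma]

/-- element of S with single matrix entry -/
noncomputable def sing {i : Ix S} (e f : XX i) (g : WithZero (Grp (rp i).1)) : S :=
  (tt e.1)⁻¹ * gval g * tt f.1

theorem sing_R {i : Ix S} (e f : XX i) {g : WithZero (Grp (rp i).1)} (hg : g ≠ 0) :
    sing e f g * (sing e f g)⁻¹ = e.1.1 := by
  have h1 := gval_spec hg
  have : sing e f g * (sing e f g)⁻¹ =
      (tt e.1)⁻¹ * (gval g * (tt f.1 * (tt f.1)⁻¹) * (gval g)⁻¹) * tt e.1 := by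
    unfold sing; simp only [mi, ii, ma]
  rw [this, tt_R', mul_r h1.2, h1.1, ← tt_R' e, iai, tt_D]

theorem sing_D {i : Ix S} (e f : XX i) {g : WithZero (Grp (rp i).1)} (hg : g ≠ 0) :
    (sing e f g)⁻¹ * (sing e f g) = f.1.1 := by
  have h1 := gval_spec hg
  have : (sing e f g)⁻¹ * (sing e f g) =
      (tt f.1)⁻¹ * ((gval g)⁻¹ * (tt e.1 * (tt e.1)⁻¹) * (gval g)) * tt f.1 := by
    unfold sing; simp only [mi, ii, ma]
  rw [this, tt_R', ma _ (rp i).1, r_mul h1.1, h1.2, ← tt_R' f, iai, tt_D]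

end Main

theorem mat_surj {S : Type u} [Mul S] [Zero S] [Inv S] [IsBooleanInverseSemigroup S]
    (M : ∀ i : Ix S, XX i → XX i → WithZero (Grp (rp i).1)) (hM : ∀ i, IsRook (M i))
    (hfin : {i : Ix S | M i ≠ fun _ _ => 0}.Finite) : ∃ a : S, mat a = M := by
  have hrow : ∀ (i : Ix S) (e f f' : XX i), M i e f ≠ 0 → M i e f' ≠ 0 → f = f' := by
    intro i e f f' h h'
    by_contra hc
    exact (row_zero.1 ((hM i).2.1 e f f' hc)).elim h h'
  have hcol : ∀ (i : Ix S) (e e' f : XX i), M i e f ≠ 0 → M i e' f ≠ 0 → e = e' := by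
    intro i e e' f h h'
    by_contra hc
    exact (col_zero.1 ((hM i).2.2 e e' f hc)).elim h h'
  let T : Set S := ⋃ i ∈ {i : Ix S | M i ≠ fun _ _ => 0},
    (fun p : XX i × XX i => sing p.1 p.2 (M i p.1 p.2)) '' {p | M i p.1 p.2 ≠ 0}
  have hT : T.Finite := hfin.biUnion fun i _ => (hM i).1.image _
  have hmem : ∀ s : S, s ∈ T ↔ ∃ (i : Ix S) (e f : XX i), M i e f ≠ 0 ∧ s = sing e f (M i e f) := by
    intro s
    constructor
    · intro hs
      obtain ⟨i, _, ⟨e, f⟩, h, rfl⟩ := Set.mem_iUnion₂.1 hs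
      exact ⟨i, e, f, h, rfl⟩
    · rintro ⟨i, e, f, h, rfl⟩
      refine Set.mem_iUnion₂.2 ⟨i, fun h0 => h ?_, ⟨e, f⟩, h, rfl⟩
      rw [h0]
  obtain ⟨j, hj, -⟩ := exists_big_join T hT
    (by
      intro u hu
      obtain ⟨i, e, f, h, rfl⟩ := (hmem u).1 hu
      rw [sing_R e f h]; exact e.1.2)
    (by
      intro u hu v hv huv
      obtain ⟨i, e, f, h, rfl⟩ := (hmem u).1 hu
      obtain ⟨i', e', f', h', rfl⟩ := (hmem v).1 hv
      rw [sing_R e f h, sing_R e' f' h'] at huv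
      have h1 := Subtype.ext huv
      obtain ⟨e, rfl⟩ := e
      obtain ⟨e', rfl⟩ := e'
      simp only at h1
      subst h1
      have := hrow _ _ _ _ h h'
      subst this
      rfl)
    (by
      intro u hu v hv huv
      obtain ⟨i, e, f, h, rfl⟩ := (hmem u).1 hu
      obtain ⟨i', e', f', h', rfl⟩ := (hmem v).1 hv
      rw [sing_D e f h, sing_D e' f' h'] at huv
      have h1 := Subtype.ext huv
      obtain ⟨f, rfl⟩ := f
      obtain ⟨f', rfl⟩ := f'
      simp only at h1
      subst h1
      have := hcol _ _ _ _ h h'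
      subst this
      rfl)
  refine ⟨j, ?_⟩
  funext i e f
  apply gval_inj (rp i).2.2.1
  rw [gval_mat]
  have key : tt e.1 * j = tt e.1 * (e.1.1 * j) := by
    rw [← ma, mul_r (tt_D e.1)]
  by_cases hex : ∃ f' : XX i, M i e f' ≠ 0
  · obtain ⟨f', hf'⟩ := hex
    have h1 := (hj e.1.1 e.1.2).1 _ ((hmem _).2 ⟨i, e, f', hf', rfl⟩) (sing_R e f' hf')
    have h2 := gval_spec hf'
    have h3 : tt e.1 * j = gval (M i e f') * tt f'.1 := by
      rw [key, h1]
      unfold sing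
      rw [ma, ← ma (tt e.1), tt_R', ← ma, r_mul h2.1]
    rw [h3]
    by_cases hff : f = f'
    · subst hff
      rw [ma, tt_R', mul_r h2.2]
    · have h4 : tt f'.1 * (tt f.1)⁻¹ = 0 := by
        by_contra h4
        have h5 := D_eq (tt_IA _) (tt_IA _) h4
        rw [tt_D, tt_D] at h5
        exact hff (Subtype.ext (Subtype.ext h5.symm))
      have h5 : M i e f = 0 := by
        by_contra h5
        exact hff (hrow i e f f' h5 hf')
      rw [ma, h4, mz, h5, gval_zero]
  · push Not at hex
    have h1 := (hj e.1.1 e.1.2).2 (by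
      intro u hu h1
      obtain ⟨i', e', f', h', rfl⟩ := (hmem u).1 hu
      rw [sing_R e' f' h'] at h1
      have h2 := Subtype.ext h1
      obtain ⟨e, rfl⟩ := e
      obtain ⟨e', rfl⟩ := e'
      simp only at h2
      subst h2
      exact h' (hex f'))
    rw [key, h1, mz, zm, hex f, gval_zero]


/-- Every semisimple Boolean inverse semigroup is isomorphic to a restricted
direct product `⊕_{i ∈ I} M_{|X_i|}(G_i⁰)` of Boolean inverse semigroups of
generalized rook matrices over groups with zero adjoined: there is an injective
multiplicative map `Φ` whose image is exactly the set of finite-support families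
of rook matrices. -/
theorem semisimple_structure (S : Type u) [Mul S] [Zero S] [Inv S]
    [IsBooleanInverseSemigroup S]
    (hss : ∀ a : S, {x : S | nle x a}.Finite) :
    ∃ (I : Type u) (G : I → Type u) (_ : ∀ i, Group (G i))
      (X : I → Type u) (_ : ∀ i, Nonempty (X i))
      (Φ : S → ∀ i : I, {M : X i → X i → WithZero (G i) // IsRook M}),
      Function.Injective Φ ∧
      (∀ a : S, {i : I | (Φ a i).val ≠ fun _ _ => (0 : WithZero (G i))}.Finite) ∧
      (∀ f : ∀ i : I, {M : X i → X i → WithZero (G i) // IsRook M},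
        {i : I | (f i).val ≠ fun _ _ => (0 : WithZero (G i))}.Finite →
          ∃ a : S, Φ a = f) ∧
      (∀ a b : S, ∀ i : I, (Φ (a * b) i).val = rookMul (Φ a i).val (Φ b i).val) := by
  refine ⟨Ix S, fun i => Grp (rp i).1, fun i => instGG i, fun i => XX i,
    fun i => ⟨⟨rp i, cl_rp i⟩⟩, fun a i => ⟨mat a i, mat_rook hss a i⟩, ?_, ?_, ?_, ?_⟩
  · intro a b h
    apply eq_of_atoms hss
    apply mat_inj
    funext i
    exact congrArg Subtype.val (congrFun h i)
  · intro a
    refine ((fin_supp hss a).image cl).subset ?_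
    intro i hi
    have : ∃ e f, mat a i e f ≠ 0 := by
      by_contra hc
      push Not at hc
      exact hi (funext fun e => funext fun f => hc e f)
    obtain ⟨e, f, h⟩ := this
    refine ⟨e.1, tt_mul_ne fun h0 => mat_ne.1 h ?_, e.2⟩
    rw [h0, zm]
  · intro f hf
    obtain ⟨a, ha⟩ := mat_surj (fun i => (f i).1) (fun i => (f i).2) hf
    exact ⟨a, funext fun i => Subtype.ext (congrFun ha i)⟩
  · intro a b i
    exact mat_mul a b i

end Paper
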